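/- Let g be a 4×4 complex matrix. Then g commutes with the quaternionic structure j and its induced action Λ²g on 2-vectors satisfies (g e₁)∧(g e₂) = e₁∧e₂, (g e₃)∧(g e₄) = e₃∧e₄, and (g e₁)∧(g e₃) − (g e₂)∧(g e₄) = e₁∧e₃ − e₂∧e₄, if and only if there exist a, b ∈ ℂ with a·conj a − b·conj b = 1 such that g = [[a, b, 0, 0], [conj b, conj a, 0, 0], [0, 0, conj a, conj b], [0, 0, b, a]]. In particular, any such g has determinant 1. (This makes precise the paper's description of the group of SL(4,ℂ) matrices commuting with j and fixing ṽ = e₁∧e₂+e₃∧e₄, ṽ∞ = i e₁∧e₂ − i e₃∧e₄, and e₁∧e₃ − e₂∧e₄.) -/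

import Mathlib

open ComplexConjugate

/-- The inclusion of `ℂ⁴` into its exterior algebra. -/
noncomputable def ι4 : (Fin 4 → ℂ) →ₗ[ℂ] ExteriorAlgebra ℂ (Fin 4 → ℂ) :=
  ExteriorAlgebra.ι ℂ

/-- The standard basis of `ℂ⁴`. -/
def e (i : Fin 4) : Fin 4 → ℂ := Pi.single i 1

/-- The quaternionic structure `j` on `ℂ⁴`. -/
def jq (x : Fin 4 → ℂ) : Fin 4 → ℂ :=
  ![-(conj (x 2)), -(conj (x 3)), conj (x 0), conj (x 1)]

/-- The linear functional on the exterior algebra reading off the `(p, q)` minor. -/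
noncomputable def minorF (p q : Fin 4) : ExteriorAlgebra ℂ (Fin 4 → ℂ) →ₗ[ℂ] ℂ :=
  ExteriorAlgebra.liftAlternating (fun n => match n with
    | 2 => (Matrix.detRowAlternating (n := Fin 2) (R := ℂ)).compLinearMap
        (LinearMap.funLeft ℂ ℂ ![p, q])
    | _ => 0)

lemma minorF_mul (p q : Fin 4) (u v : Fin 4 → ℂ) :
    minorF p q (ι4 u * ι4 v) = u p * v q - u q * v p := by
  have h : ι4 u * ι4 v = ExteriorAlgebra.ιMulti ℂ 2 ![u, v] := by
    simp [ExteriorAlgebra.ιMulti_apply, ι4]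
  rw [h, minorF, ExteriorAlgebra.liftAlternating_apply_ιMulti]
  change Matrix.det (Matrix.of fun i => LinearMap.funLeft ℂ ℂ ![p, q] (![u, v] i)) = _
  rw [Matrix.det_fin_two]
  simp [LinearMap.funLeft]

lemma vec_expand (u : Fin 4 → ℂ) :
    u = u 0 • e 0 + u 1 • e 1 + u 2 • e 2 + u 3 • e 3 := by
  ext i
  fin_cases i <;> simp [e]

lemma wedge_self (u : Fin 4 → ℂ) : ι4 u * ι4 u = 0 := by simp [ι4]

lemma wedge_swap (u v : Fin 4 → ℂ) : ι4 v * ι4 u = - (ι4 u * ι4 v) := by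
  have h := ExteriorAlgebra.ι_add_mul_swap (R := ℂ) v u
  exact eq_neg_of_add_eq_zero_left h

lemma wedge_expand (u v : Fin 4 → ℂ) :
    ι4 u * ι4 v = (u 0 * v 1 - u 1 * v 0) • (ι4 (e 0) * ι4 (e 1))
      + (u 0 * v 2 - u 2 * v 0) • (ι4 (e 0) * ι4 (e 2))
      + (u 0 * v 3 - u 3 * v 0) • (ι4 (e 0) * ι4 (e 3))
      + (u 1 * v 2 - u 2 * v 1) • (ι4 (e 1) * ι4 (e 2))
      + (u 1 * v 3 - u 3 * v 1) • (ι4 (e 1) * ι4 (e 3))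
      + (u 2 * v 3 - u 3 * v 2) • (ι4 (e 2) * ι4 (e 3)) := by
  conv_lhs => rw [vec_expand u, vec_expand v]
  simp only [map_add, map_smul, add_mul, mul_add, smul_mul_assoc, mul_smul_comm, wedge_self,
    wedge_swap (e 0) (e 1), wedge_swap (e 0) (e 2), wedge_swap (e 0) (e 3),
    wedge_swap (e 1) (e 2), wedge_swap (e 1) (e 3), wedge_swap (e 2) (e 3)]
  module

lemma mulVec_e (g : Matrix (Fin 4) (Fin 4) ℂ) (i k : Fin 4) : g.mulVec (e i) k = g k i := by
  simp [e]

lemma e_apply (i k : Fin 4) : e i k = if k = i then 1 else 0 := by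
  simp [e, Pi.single_apply]

lemma forward_dir (g : Matrix (Fin 4) (Fin 4) ℂ)
    (hj : ∀ x : Fin 4 → ℂ, g.mulVec (jq x) = jq (g.mulVec x))
    (h1 : ι4 (g.mulVec (e 0)) * ι4 (g.mulVec (e 1)) = ι4 (e 0) * ι4 (e 1))
    (h3 : ι4 (g.mulVec (e 0)) * ι4 (g.mulVec (e 2)) - ι4 (g.mulVec (e 1)) * ι4 (g.mulVec (e 3))
          = ι4 (e 0) * ι4 (e 2) - ι4 (e 1) * ι4 (e 3)) :
    ∃ a b : ℂ, a * conj a - b * conj b = 1 ∧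
        g = !![a, b, 0, 0;
               conj b, conj a, 0, 0;
               0, 0, conj a, conj b;
               0, 0, b, a] := by
  have j0 : jq (e 0) = e 2 := by ext i; fin_cases i <;> simp [jq, e]
  have j1 : jq (e 1) = e 3 := by ext i; fin_cases i <;> simp [jq, e]
  have c0 := hj (e 0)
  have c1 := hj (e 1)
  rw [j0] at c0
  rw [j1] at c1
  have d0 : ∀ k, g k 2 = jq (g.mulVec (e 0)) k := fun k => by rw [← c0, mulVec_e]
  have d1 : ∀ k, g k 3 = jq (g.mulVec (e 1)) k := fun k => by rw [← c1, mulVec_e]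
  have m1 : ∀ p q, g p 0 * g q 1 - g q 0 * g p 1 = e 0 p * e 1 q - e 0 q * e 1 p := fun p q => by
    have := congrArg (minorF p q) h1
    simpa only [minorF_mul, mulVec_e] using this
  have m3 : ∀ p q, (g p 0 * g q 2 - g q 0 * g p 2) - (g p 1 * g q 3 - g q 1 * g p 3)
      = (e 0 p * e 2 q - e 0 q * e 2 p) - (e 1 p * e 3 q - e 1 q * e 3 p) := fun p q => by
    have := congrArg (minorF p q) h3
    simpa only [map_sub, minorF_mul, mulVec_e] using this
  have a01 : g 0 0 * g 1 1 - g 1 0 * g 0 1 = 1 := by simpa [e_apply] using m1 0 1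
  have a02 : g 0 0 * g 2 1 - g 2 0 * g 0 1 = 0 := by simpa [e_apply] using m1 0 2
  have a03 : g 0 0 * g 3 1 - g 3 0 * g 0 1 = 0 := by simpa [e_apply] using m1 0 3
  have a12 : g 1 0 * g 2 1 - g 2 0 * g 1 1 = 0 := by simpa [e_apply] using m1 1 2
  have a13 : g 1 0 * g 3 1 - g 3 0 * g 1 1 = 0 := by simpa [e_apply] using m1 1 3
  have z20 : g 2 0 = 0 := by
    linear_combination (-g 2 0) * a01 + (g 1 0) * a02 - (g 0 0) * a12
  have z30 : g 3 0 = 0 := by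
    linear_combination (-g 3 0) * a01 + (g 1 0) * a03 - (g 0 0) * a13
  have z21 : g 2 1 = 0 := by
    linear_combination (-g 2 1) * a01 + (g 1 1) * a02 - (g 0 1) * a12
  have z31 : g 3 1 = 0 := by
    linear_combination (-g 3 1) * a01 + (g 1 1) * a03 - (g 0 1) * a13
  have g02 : g 0 2 = 0 := by rw [d0]; simp [jq, -Matrix.mulVec_single, mulVec_e, z20]
  have g12 : g 1 2 = 0 := by rw [d0]; simp [jq, mulVec_e, z30]
  have g22 : g 2 2 = conj (g 0 0) := by rw [d0]; simp [jq, mulVec_e]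
  have g32 : g 3 2 = conj (g 1 0) := by rw [d0]; simp [jq, mulVec_e]
  have g03 : g 0 3 = 0 := by rw [d1]; simp [jq, mulVec_e, z21]
  have g13 : g 1 3 = 0 := by rw [d1]; simp [jq, mulVec_e, z31]
  have g23 : g 2 3 = conj (g 0 1) := by rw [d1]; simp [jq, mulVec_e]
  have g33 : g 3 3 = conj (g 1 1) := by rw [d1]; simp [jq, mulVec_e]
  have b02 : g 0 0 * conj (g 0 0) - g 0 1 * conj (g 0 1) = 1 := by
    simpa [e_apply, z20, z21, g22, g23] using m3 0 2
  have b12 : g 1 0 * conj (g 0 0) - g 1 1 * conj (g 0 1) = 0 := by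
    simpa [e_apply, z20, z21, g22, g23] using m3 1 2
  have w11 : g 1 1 = conj (g 0 0) := by
    linear_combination (-g 1 1) * b02 + conj (g 0 0) * a01 + g 0 1 * b12
  have w10 : g 1 0 = conj (g 0 1) := by
    linear_combination (-g 1 0) * b02 + conj (g 0 1) * a01 + g 0 0 * b12
  refine ⟨g 0 0, g 0 1, b02, ?_⟩
  ext i k
  fin_cases i <;> fin_cases k <;>
    simp [z20, z21, z30, z31, g02, g12, g03, g13, g22, g32, g23, g33, w11, w10]

lemma backward_dir (a b : ℂ) (h : a * conj a - b * conj b = 1)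
    (g : Matrix (Fin 4) (Fin 4) ℂ)
    (hg : g = !![a, b, 0, 0;
               conj b, conj a, 0, 0;
               0, 0, conj a, conj b;
               0, 0, b, a]) :
    (∀ x : Fin 4 → ℂ, g.mulVec (jq x) = jq (g.mulVec x)) ∧
        ι4 (g.mulVec (e 0)) * ι4 (g.mulVec (e 1)) = ι4 (e 0) * ι4 (e 1) ∧
        ι4 (g.mulVec (e 2)) * ι4 (g.mulVec (e 3)) = ι4 (e 2) * ι4 (e 3) ∧
        ι4 (g.mulVec (e 0)) * ι4 (g.mulVec (e 2)) - ι4 (g.mulVec (e 1)) * ι4 (g.mulVec (e 3))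
          = ι4 (e 0) * ι4 (e 2) - ι4 (e 1) * ι4 (e 3) := by
  refine ⟨?_, ?_, ?_, ?_⟩
  · intro x
    ext i
    fin_cases i <;>
      simp [hg, jq, Matrix.mulVec, dotProduct, Fin.sum_univ_four] <;> ring
  · rw [wedge_expand (g.mulVec (e 0))]
    simp only [mulVec_e]
    simp [hg]
    match_scalars
    linear_combination h
  · rw [wedge_expand (g.mulVec (e 2))]
    simp only [mulVec_e]
    simp [hg]
    match_scalars
    linear_combination h
  · rw [wedge_expand (g.mulVec (e 0)), wedge_expand (g.mulVec (e 1))]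
    simp only [mulVec_e]
    simp [hg]
    match_scalars <;>
      first | ring1 | linear_combination h | linear_combination -h

lemma det_form (a b : ℂ) (h : a * conj a - b * conj b = 1) :
    (!![a, b, 0, 0;
        conj b, conj a, 0, 0;
        0, 0, conj a, conj b;
        0, 0, b, a] : Matrix (Fin 4) (Fin 4) ℂ).det = 1 := by
  simp [Matrix.det_succ_row_zero, Fin.sum_univ_succ, Fin.succAbove]
  linear_combination (a * conj a - b * conj b + 1) * h

/-- The matrices commuting with `j` whose induced action on 2-vectors fixes `e₁∧e₂`,
`e₃∧e₄` (equivalently `ṽ` and `ṽ∞`) and `e₁∧e₃ − e₂∧e₄` are exactly the matrices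
`[[a, b, 0, 0], [conj b, conj a, 0, 0], [0, 0, conj a, conj b], [0, 0, b, a]]` with
`a·conj a − b·conj b = 1`; in particular all of them have determinant 1. -/
theorem stabilizer_description (g : Matrix (Fin 4) (Fin 4) ℂ) :
    (((∀ x : Fin 4 → ℂ, g.mulVec (jq x) = jq (g.mulVec x)) ∧
        ι4 (g.mulVec (e 0)) * ι4 (g.mulVec (e 1)) = ι4 (e 0) * ι4 (e 1) ∧
        ι4 (g.mulVec (e 2)) * ι4 (g.mulVec (e 3)) = ι4 (e 2) * ι4 (e 3) ∧
        ι4 (g.mulVec (e 0)) * ι4 (g.mulVec (e 2)) - ι4 (g.mulVec (e 1)) * ι4 (g.mulVec (e 3))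
          = ι4 (e 0) * ι4 (e 2) - ι4 (e 1) * ι4 (e 3)) ↔
      (∃ a b : ℂ, a * conj a - b * conj b = 1 ∧
        g = !![a, b, 0, 0;
               conj b, conj a, 0, 0;
               0, 0, conj a, conj b;
               0, 0, b, a])) ∧
    (((∀ x : Fin 4 → ℂ, g.mulVec (jq x) = jq (g.mulVec x)) ∧
        ι4 (g.mulVec (e 0)) * ι4 (g.mulVec (e 1)) = ι4 (e 0) * ι4 (e 1) ∧
        ι4 (g.mulVec (e 2)) * ι4 (g.mulVec (e 3)) = ι4 (e 2) * ι4 (e 3) ∧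
        ι4 (g.mulVec (e 0)) * ι4 (g.mulVec (e 2)) - ι4 (g.mulVec (e 1)) * ι4 (g.mulVec (e 3))
          = ι4 (e 0) * ι4 (e 2) - ι4 (e 1) * ι4 (e 3)) →
      g.det = 1) := by
  refine ⟨⟨fun ⟨hj, h1, _, h3⟩ => forward_dir g hj h1 h3, ?_⟩, ?_⟩
  · rintro ⟨a, b, h, hg⟩
    exact backward_dir a b h g hg
  · rintro ⟨hj, h1, _, h3⟩
    obtain ⟨a, b, h, hg⟩ := forward_dir g hj h1 h3
    rw [hg]
    exact det_form a b h
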